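/- As n → ∞, (1/n) ∑_{j=1}^{n} log(j) · log(n+1−j) = log²(n) − 2 log(n) + 2 − π²/6 + o(1). -/

import Mathlib

open Real Filter

/-!
Write `N = n + 1`. Since `log j = log N + log (j / N)` and
`log (N - j) = log N + log (1 - j / N)`, the sum is `2 log N log n! - n log² N` plus
`∑ log (j / N) log (1 - j / N)`. Stirling's formula turns the first part, divided by `n`, into
`log² n - 2 log n + o(1)`. The second part is a Riemann sum of a function that extends continuously
to `[0, 1]`. Its integral follows from the power series of `log (1 - x)`: it is
`∑ 1 / ((k + 1) (k + 2)²) = 2 - π² / 6`, by partial fractions and `ζ(2) = π² / 6`.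
-/

open Set MeasureTheory Asymptotics
open scoped Topology Nat

section RiemannSum

variable {E : Type*} [NormedAddCommGroup E] [NormedSpace ℝ E] [CompleteSpace E] {f : ℝ → E}

lemma norm_smul_sub_integral_le {a b ε : ℝ} (hab : a ≤ b) (hf : IntervalIntegrable f volume a b)
    (hε : ∀ t ∈ Icc a b, ‖f a - f t‖ ≤ ε) :
    ‖(b - a) • f a - ∫ t in a..b, f t‖ ≤ ε * (b - a) := by
  rw [← intervalIntegral.integral_const, ← intervalIntegral.integral_sub (by simp) hf,
    ← abs_of_nonneg (sub_nonneg.2 hab)]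
  refine intervalIntegral.norm_integral_le_of_norm_le_const fun t ht ↦ hε t ?_
  rw [uIoc_of_le hab] at ht
  exact Ioc_subset_Icc_self ht

lemma norm_sum_smul_sub_integral_le {x : ℕ → ℝ} (hx : Monotone x) {n : ℕ} {ε : ℝ}
    (hf : IntervalIntegrable f volume (x 0) (x n))
    (hε : ∀ j < n, ∀ t ∈ Icc (x j) (x (j + 1)), ‖f (x j) - f t‖ ≤ ε) :
    ‖∑ j ∈ Finset.range n, (x (j + 1) - x j) • f (x j) - ∫ t in x 0..x n, f t‖ ≤
      ε * (x n - x 0) := by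
  have hfj : ∀ j < n, IntervalIntegrable f volume (x j) (x (j + 1)) := fun j hj ↦ by
    refine hf.mono_set ?_
    rw [uIcc_of_le (hx j.le_succ), uIcc_of_le (hx n.zero_le)]
    exact Icc_subset_Icc (hx j.zero_le) (hx hj)
  rw [← intervalIntegral.sum_integral_adjacent_intervals hfj, ← Finset.sum_sub_distrib,
    ← Finset.sum_range_sub x n, Finset.mul_sum]
  refine norm_sum_le_of_le _ fun j hj ↦ ?_
  have hjn := Finset.mem_range.1 hj
  exact norm_smul_sub_integral_le (hx j.le_succ) (hfj j hjn) (hε j hjn)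

lemma tendsto_riemannSum {a b : ℝ} (hab : a ≤ b) (hf : ContinuousOn f (Icc a b)) :
    Tendsto (fun n : ℕ ↦ ((b - a) / n) • ∑ j ∈ Finset.range n, f (a + j * ((b - a) / n)))
      atTop (𝓝 (∫ t in a..b, f t)) := by
  rw [Metric.tendsto_nhds]
  intro ε hε
  have hba : 0 ≤ b - a := sub_nonneg.2 hab
  obtain ⟨η, hη, hηε⟩ := exists_pos_mul_lt hε (b - a)
  obtain ⟨δ, hδ, hfδ⟩ := Metric.uniformContinuousOn_iff.1
    (isCompact_Icc.uniformContinuousOn_of_continuous hf) η hη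
  have hstep : ∀ᶠ n : ℕ in atTop, (b - a) / n < δ :=
    (tendsto_const_div_atTop_nhds_zero_nat (b - a)).eventually_lt_const hδ
  filter_upwards [hstep, eventually_gt_atTop 0] with n hnδ hn
  set h : ℝ := (b - a) / n
  set x : ℕ → ℝ := fun j ↦ a + j * h
  have hh : 0 ≤ h := div_nonneg hba n.cast_nonneg
  have hx : Monotone x := (Nat.mono_cast.mul_const hh).const_add a
  have hsucc (j : ℕ) : x (j + 1) - x j = h := by simp only [x]; push_cast; ring
  have hx0 : x 0 = a := by simp [x]
  have hxn : x n = b := by simp only [x, h]; field_simp; ring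
  have hosc : ∀ j < n, ∀ t ∈ Icc (x j) (x (j + 1)), ‖f (x j) - f t‖ ≤ η := fun j hj t ht ↦ by
    have haj : a ≤ x j := hx0 ▸ hx j.zero_le
    have hjb : x (j + 1) ≤ b := hxn ▸ hx hj
    rw [← dist_eq_norm]
    refine (hfδ _ ⟨haj, ht.1.trans (ht.2.trans hjb)⟩ _ ⟨haj.trans ht.1, ht.2.trans hjb⟩ ?_).le
    rw [dist_comm, Real.dist_eq, abs_of_nonneg (sub_nonneg.2 ht.1)]
    linarith [hsucc j, ht.2]
  have herr := norm_sum_smul_sub_integral_le hx (n := n)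
    (by simpa only [hx0, hxn] using hf.intervalIntegrable_of_Icc hab) hosc
  simp only [hsucc, ← Finset.smul_sum, hx0, hxn] at herr
  rw [dist_eq_norm]
  exact (herr.trans_eq (mul_comm η _)).trans_lt hηε

end RiemannSum

section Integral

lemma continuousAt_log_mul_of_differentiableAt {f : ℝ → ℝ} (hf : DifferentiableAt ℝ f 0)
    (hf0 : f 0 = 0) : ContinuousAt (fun x ↦ log x * f x) 0 := by
  have hslope (x : ℝ) : log x * f x = x * log x * dslope f 0 x := by
    have : x * dslope f 0 x = f x := by simpa [hf0] using sub_smul_dslope f 0 x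
    rw [← this]; ring
  simp only [hslope]
  exact continuous_mul_log.continuousAt.mul (continuousAt_dslope_same.2 hf)

-- At `0` and `1` the product takes the value `0` because `Real.log 0 = 0`; this is also its limit.
lemma continuous_log_mul_log_one_sub : Continuous fun x : ℝ ↦ log x * log (1 - x) := by
  have hzero : ContinuousAt (fun x : ℝ ↦ log x * log (1 - x)) 0 :=
    continuousAt_log_mul_of_differentiableAt
      (DifferentiableAt.log (by fun_prop) (by norm_num)) (by simp)
  rw [continuous_iff_continuousAt]
  intro x
  rcases eq_or_ne x 0 with rfl | hx0
  · exact hzero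
  rcases eq_or_ne x 1 with rfl | hx1
  · have hsymm : ContinuousAt ((fun x : ℝ ↦ log x * log (1 - x)) ∘ fun x ↦ 1 - x) 1 :=
      ContinuousAt.comp (by simpa using hzero) (by fun_prop)
    simpa only [Function.comp_def, sub_sub_cancel, mul_comm] using hsymm
  · exact (continuousAt_log hx0).mul
      (ContinuousAt.log (by fun_prop) (sub_ne_zero.2 hx1.symm))

lemma intervalIntegrable_pow_mul_log (k : ℕ) (a b : ℝ) :
    IntervalIntegrable (fun x ↦ x ^ k * log x) volume a b :=
  intervalIntegral.intervalIntegrable_log'.continuousOn_mul (by fun_prop)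

lemma integral_pow_mul_log (k : ℕ) (a b : ℝ) :
    ∫ x in a..b, x ^ k * log x =
      (b ^ (k + 1) * log b - a ^ (k + 1) * log a) / (k + 1) -
        (b ^ (k + 1) - a ^ (k + 1)) / (k + 1) ^ 2 := by
  have hk : (k : ℝ) + 1 ≠ 0 := by positivity
  rw [integral_eq_of_hasDerivAt_off_countable
    (fun x ↦ x ^ k * (x * log x) / (k + 1) - x ^ (k + 1) / (k + 1) ^ 2) _
    (countable_singleton 0) ?continuous ?deriv (intervalIntegrable_pow_mul_log k a b)]
  case continuous =>
    have := continuous_mul_log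
    fun_prop
  case deriv =>
    rintro x ⟨-, hx⟩
    have hx0 : x ≠ 0 := hx
    have hpow := hasDerivAt_pow (k + 1) x
    have hderiv := ((hpow.mul (hasDerivAt_log hx0)).div_const ((k : ℝ) + 1)).sub
      (hpow.div_const (((k : ℝ) + 1) ^ 2))
    convert! hderiv using 1
    · funext y
      simp only [Pi.sub_apply, Pi.mul_apply]
      ring
    · rw [Nat.add_sub_cancel, Nat.cast_add_one]
      field_simp
      ring
  ring

lemma hasSum_sub_succ_of_antitone {u : ℕ → ℝ} {l : ℝ} (hu : Antitone u)
    (hl : Tendsto u atTop (𝓝 l)) : HasSum (fun n ↦ u n - u (n + 1)) (u 0 - l) := by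
  rw [hasSum_iff_tendsto_nat_of_nonneg fun n ↦ sub_nonneg.2 (hu n.le_succ)]
  simpa only [Finset.sum_range_sub'] using hl.const_sub (u 0)

lemma hasSum_one_div_succ_mul_add_two_sq :
    HasSum (fun k : ℕ ↦ 1 / (((k : ℝ) + 1) * ((k : ℝ) + 2) ^ 2)) (2 - π ^ 2 / 6) := by
  have htelescope : HasSum (fun k : ℕ ↦ 1 / ((k : ℝ) + 1) - 1 / ((k : ℝ) + 2)) 1 := by
    have hanti : Antitone fun k : ℕ ↦ 1 / ((k : ℝ) + 1) := fun i j hij ↦ by dsimp only; gcongr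
    simpa [add_assoc, one_add_one_eq_two] using
      hasSum_sub_succ_of_antitone hanti tendsto_one_div_add_atTop_nhds_zero_nat
  have hzeta : HasSum (fun k : ℕ ↦ 1 / ((k : ℝ) + 2) ^ 2) (π ^ 2 / 6 - 1) := by
    simpa [Finset.sum_range_succ] using (hasSum_nat_add_iff' 2).2 hasSum_zeta_two
  convert! htelescope.sub hzeta using 1
  · funext k
    field_simp
    ring
  · ring

lemma hasSum_log_mul_log_one_sub {x : ℝ} (hx : x ∈ Ioc 0 1) :
    HasSum (fun k : ℕ ↦ -(x ^ (k + 1) * log x) / (k + 1)) (log x * log (1 - x)) := by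
  rcases hx.2.eq_or_lt with rfl | hx1
  · simp [hasSum_zero]
  · have := (hasSum_pow_div_log_of_abs_lt_one (abs_lt.2 ⟨by linarith [hx.1], hx1⟩)).mul_left
      (-log x)
    convert! this using 1
    · funext k; ring
    · ring

lemma hasSum_integral_of_nonneg {α ι : Type*} [MeasurableSpace α] [Countable ι] {μ : Measure α}
    {F : ι → α → ℝ} {f : α → ℝ} (hF_meas : ∀ i, AEStronglyMeasurable (F i) μ)
    (hF_nonneg : ∀ i, ∀ᵐ a ∂μ, 0 ≤ F i a) (hf : Integrable f μ)
    (hF_sum : ∀ᵐ a ∂μ, HasSum (F · a) (f a)) :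
    HasSum (fun i ↦ ∫ a, F i a ∂μ) (∫ a, f a ∂μ) :=
  -- A series of nonnegative terms dominates itself.
  hasSum_integral_of_dominated_convergence F hF_meas
    (fun i ↦ (hF_nonneg i).mono fun _ ha ↦ (norm_of_nonneg ha).le)
    (hF_sum.mono fun _ ha ↦ ha.summable)
    (hf.congr (hF_sum.mono fun _ ha ↦ ha.tsum_eq.symm)) hF_sum

lemma integral_log_mul_log_one_sub : ∫ x in (0 : ℝ)..1, log x * log (1 - x) = 2 - π ^ 2 / 6 := by
  set F : ℕ → ℝ → ℝ := fun k x ↦ -(x ^ (k + 1) * log x) / (k + 1)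
  have hF_int (k : ℕ) : IntervalIntegrable (F k) volume 0 1 :=
    (intervalIntegrable_pow_mul_log (k + 1) 0 1).neg.div_const _
  have hF_nonneg (k : ℕ) {x : ℝ} (hx : x ∈ Ioc 0 1) : 0 ≤ F k x :=
    div_nonneg (neg_nonneg.2 (mul_nonpos_of_nonneg_of_nonpos (pow_nonneg hx.1.le _)
      (log_nonpos hx.1.le hx.2))) (by positivity)
  have hF_integral (k : ℕ) :
      ∫ x in (0 : ℝ)..1, F k x = 1 / (((k : ℝ) + 1) * ((k : ℝ) + 2) ^ 2) := by
    simp only [F, intervalIntegral.integral_div, intervalIntegral.integral_neg,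
      integral_pow_mul_log]
    simp only [one_pow, zero_pow (k + 1).succ_ne_zero, log_one, mul_zero, zero_mul, sub_self,
      zero_div, sub_zero, zero_sub, neg_neg, Nat.cast_add_one]
    field_simp
    ring
  have hswap : HasSum (fun k ↦ ∫ x in (0 : ℝ)..1, F k x)
      (∫ x in (0 : ℝ)..1, log x * log (1 - x)) := by
    simp only [intervalIntegral.integral_of_le zero_le_one]
    exact hasSum_integral_of_nonneg (fun k ↦ (hF_int k).1.aestronglyMeasurable)
      (fun k ↦ ae_restrict_of_forall_mem measurableSet_Ioc fun x ↦ hF_nonneg k)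
      (continuous_log_mul_log_one_sub.intervalIntegrable 0 1).1
      (ae_restrict_of_forall_mem measurableSet_Ioc fun x ↦ hasSum_log_mul_log_one_sub)
  simp only [hF_integral] at hswap
  exact hswap.unique hasSum_one_div_succ_mul_add_two_sq

end Integral

section Factorial

lemma sum_Icc_one_reflect {M : Type*} [AddCommMonoid M] (f : ℕ → M) (n : ℕ) :
    ∑ j ∈ Finset.Icc 1 n, f (n + 1 - j) = ∑ j ∈ Finset.Icc 1 n, f j := by
  simpa [← Finset.Ico_add_one_right_eq_Icc] using
    Finset.sum_Ico_reflect f 1 (show n + 1 ≤ n + 1 + 1 by omega)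

lemma sum_log_eq_log_factorial (n : ℕ) :
    ∑ j ∈ Finset.Icc 1 n, log (j : ℝ) = log (n ! : ℝ) := by
  rw [← Finset.prod_Ico_id_eq_factorial, Finset.Ico_add_one_right_eq_Icc, Nat.cast_prod, log_prod]
  intro j hj
  have := (Finset.mem_Icc.1 hj).1
  positivity

lemma sum_log_reflect_eq_log_factorial (n : ℕ) :
    ∑ j ∈ Finset.Icc 1 n, log ((n : ℝ) + 1 - j) = log (n ! : ℝ) := by
  rw [← sum_log_eq_log_factorial, ← sum_Icc_one_reflect fun j ↦ log (j : ℝ)]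
  refine Finset.sum_congr rfl fun j hj ↦ ?_
  rw [Nat.cast_sub ((Finset.mem_Icc.1 hj).2.trans n.le_succ), Nat.cast_succ]

lemma isBigO_log_factorial_sub :
    (fun n : ℕ ↦ log (n ! : ℝ) - (n * log n - n)) =O[atTop] fun n : ℕ ↦ log (n : ℝ) := by
  have hstirling : (fun n ↦ log (Stirling.stirlingSeq n) + log 2 / 2) =O[atTop]
      fun n : ℕ ↦ log (n : ℝ) :=
    (((Stirling.tendsto_stirlingSeq_sqrt_pi.log (by positivity)).add_const _).isBigO_one ℝ).trans
      (isLittleO_const_log_atTop.isBigO.comp_tendsto tendsto_natCast_atTop_atTop)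
  refine (hstirling.add ((isBigO_refl _ _).const_mul_left (1 / 2))).congr' ?_ .rfl
  filter_upwards [eventually_gt_atTop 0] with n hn
  have hn0 : (n : ℝ) ≠ 0 := by positivity
  rw [Stirling.log_stirlingSeq_formula, log_mul two_ne_zero hn0, log_div hn0 (exp_ne_zero 1),
    log_exp]
  ring

lemma tendsto_log_pow_mul_log_factorial_div_sub (k : ℕ) :
    Tendsto (fun n : ℕ ↦ log n ^ k * (log (n ! : ℝ) / n - (log n - 1))) atTop (𝓝 0) := by
  have hlog : (fun n : ℕ ↦ log (n : ℝ) ^ (k + 1)) =o[atTop] fun n : ℕ ↦ (n : ℝ) :=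
    isLittleO_pow_log_id_atTop.comp_tendsto tendsto_natCast_atTop_atTop
  have herr : (fun n : ℕ ↦ log (n : ℝ) ^ k * (log (n ! : ℝ) - (n * log n - n))) =o[atTop]
      fun n : ℕ ↦ (n : ℝ) :=
    ((isBigO_refl _ _).mul isBigO_log_factorial_sub).trans_isLittleO
      (by simpa only [pow_succ] using hlog)
  refine herr.tendsto_div_nhds_zero.congr' ?_
  filter_upwards [eventually_gt_atTop 0] with n hn
  field_simp

lemma tendsto_two_mul_log_succ_mul_log_factorial_div_sub :
    Tendsto (fun n : ℕ ↦ 2 * log ((n : ℝ) + 1) * (log (n ! : ℝ) / n) - log ((n : ℝ) + 1) ^ 2 -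
      (log n ^ 2 - 2 * log n)) atTop (𝓝 0) := by
  -- With `d = log (n + 1) - log n` and `e = log n! / n - (log n - 1)`, the expression equals
  -- `2 (e log n + d e - d) - d²`.
  have hd : Tendsto (fun n : ℕ ↦ log ((n : ℝ) + 1) - log n) atTop (𝓝 0) :=
    tendsto_log_nat_add_one_sub_log
  have he : Tendsto (fun n : ℕ ↦ log (n ! : ℝ) / n - (log n - 1)) atTop (𝓝 0) := by
    simpa only [pow_zero, one_mul] using tendsto_log_pow_mul_log_factorial_div_sub 0
  have hle : Tendsto (fun n : ℕ ↦ log n * (log (n ! : ℝ) / n - (log n - 1))) atTop (𝓝 0) := by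
    simpa only [pow_one] using tendsto_log_pow_mul_log_factorial_div_sub 1
  have := (((hle.add (hd.mul he)).sub hd).const_mul 2).sub (hd.pow 2)
  convert! this using 1
  · funext n; ring
  · norm_num

end Factorial

lemma log_mul_log_sub {x N : ℝ} (hx : x ≠ 0) (hN : N ≠ 0) (hxN : N ≠ x) :
    log x * log (N - x) = log N * (log x + log (N - x)) - log N ^ 2 +
      log (x / N) * log (1 - x / N) := by
  rw [one_sub_div hN, log_div hx hN, log_div (sub_ne_zero.2 hxN) hN]
  ring

lemma sum_log_mul_log_sub (n : ℕ) :
    ∑ j ∈ Finset.Icc 1 n, log (j : ℝ) * log ((n : ℝ) + 1 - j) =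
      2 * log ((n : ℝ) + 1) * log (n ! : ℝ) - n * log ((n : ℝ) + 1) ^ 2 +
        ∑ j ∈ Finset.range (n + 1), log ((j : ℝ) / (n + 1)) * log (1 - j / (n + 1)) := by
  have hsplit : ∀ j ∈ Finset.Icc 1 n, log (j : ℝ) * log ((n : ℝ) + 1 - j) =
      log ((n : ℝ) + 1) * (log (j : ℝ) + log ((n : ℝ) + 1 - j)) - log ((n : ℝ) + 1) ^ 2 +
        log ((j : ℝ) / (n + 1)) * log (1 - j / (n + 1)) := fun j hj ↦ by
    obtain ⟨hj1, hjn⟩ := Finset.mem_Icc.1 hj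
    exact log_mul_log_sub (by positivity) (by positivity)
      (by exact_mod_cast (Nat.lt_succ_of_le hjn).ne')
  rw [Finset.sum_congr rfl hsplit, Finset.sum_add_distrib, Finset.sum_sub_distrib,
    ← Finset.mul_sum, Finset.sum_add_distrib, sum_log_eq_log_factorial,
    sum_log_reflect_eq_log_factorial, Finset.sum_const, Nat.card_Icc, Finset.range_eq_Ico,
    Finset.sum_eq_sum_Ico_succ_bot n.succ_pos, zero_add, Nat.succ_eq_add_one,
    Finset.Ico_add_one_right_eq_Icc]
  simp only [Nat.add_sub_cancel, nsmul_eq_mul, Nat.cast_zero, zero_div, log_zero, zero_mul]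
  ring

lemma tendsto_sum_log_div_mul_log_one_sub_div :
    Tendsto (fun n : ℕ ↦ (1 / (n : ℝ)) *
      ∑ j ∈ Finset.range (n + 1), log ((j : ℝ) / (n + 1)) * log (1 - j / (n + 1)))
      atTop (𝓝 (2 - π ^ 2 / 6)) := by
  have hriemann := (tendsto_riemannSum zero_le_one
    continuous_log_mul_log_one_sub.continuousOn).comp (tendsto_add_atTop_nat 1)
  rw [integral_log_mul_log_one_sub] at hriemann
  have hratio : Tendsto (fun n : ℕ ↦ 1 + 1 / (n : ℝ)) atTop (𝓝 1) := by
    simpa using (tendsto_one_div_atTop_nhds_zero_nat (𝕜 := ℝ)).const_add 1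
  have hprod := hratio.mul hriemann
  rw [one_mul] at hprod
  refine hprod.congr' ?_
  filter_upwards [eventually_gt_atTop 0] with n hn
  simp only [Function.comp_apply, smul_eq_mul, zero_add, sub_zero, mul_one_div, Nat.cast_add_one]
  field_simp

theorem avg_log_mul_log :
    Tendsto (fun n : ℕ =>
        (1 / (n : ℝ)) * ∑ j ∈ Finset.Icc 1 n, Real.log j * Real.log ((n : ℝ) + 1 - j) -
          ((Real.log n) ^ 2 - 2 * Real.log n + 2 - π ^ 2 / 6))
      atTop (nhds 0) := by
  have hriemann := tendsto_sum_log_div_mul_log_one_sub_div.sub_const (2 - π ^ 2 / 6)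
  have hlim := tendsto_two_mul_log_succ_mul_log_factorial_div_sub.add hriemann
  rw [sub_self, add_zero] at hlim
  refine hlim.congr' ?_
  filter_upwards [eventually_gt_atTop 0] with n hn
  rw [sum_log_mul_log_sub]
  field_simp
  ring
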